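/- arXiv:1607.04871 — 2 statements merged into one kernel-verified Lean document; each statement's English description precedes it below -/
import Mathlib

section
/- For every integer n ≥ 2, the simplex Q_n is reflexive: the origin is the unique lattice point in the interior of Q_n, and the dual polytope Q_n^∨ is a lattice polytope (all of its vertices lie in ℤ^{n−1}). -/
open Finset

/-- The vertex `C_j` of the simplex `Q_n ⊂ ℝ^{n-1}`: coordinate `i` (0-based; the
1-based coordinate is `i+1`) equals `1` if `i+1 < n-j`, equals `-(n-j)` if `i+1 = n-j`,
and equals `0` if `i+1 > n-j`.  For `j = 0` this is the all-ones vector. -/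
noncomputable def Cvert (n j : ℕ) : Fin (n - 1) → ℝ := fun i =>
  if (i : ℕ) + 1 < n - j then 1
  else if (i : ℕ) + 1 = n - j then -((n : ℝ) - (j : ℝ))
  else 0

/-- The simplex `Q_n = conv{C_0, C_1, …, C_{n-1}} ⊂ ℝ^{n-1}`. -/
noncomputable def Qpoly (n : ℕ) : Set (Fin (n - 1) → ℝ) :=
  convexHull ℝ {x | ∃ j ≤ n - 1, x = Cvert n j}

/-- The dual polytope `P^∨ = {y ∈ ℝ^d : ⟨x, y⟩ ≤ 1 for all x ∈ P}`. -/
def dualPoly {d : ℕ} (P : Set (Fin d → ℝ)) : Set (Fin d → ℝ) :=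
  {y | ∀ x ∈ P, ∑ i, x i * y i ≤ 1}

/-!
The vertices of `Q_n` satisfy `⟨C_j, C_k⟩ = -1` for `j ≠ k`, and any `d + 1` points `v_j` of `ℝ^d`
with this property span a simplex `P` with `P^∨ = -P`. Indeed, the homogenized vectors `(1, v_j)`
are then pairwise orthogonal, so, once normalized, they are the rows of a square matrix whose
columns are orthonormal too. With `w_j = (1 + ⟨v_j, v_j⟩)⁻¹` this says
`∑ w_j = 1`, `∑ w_j v_j = 0` and `∑ w_j ⟨x, v_j⟩ v_j = x`, so that
`x = ∑ w_j (1 + ⟨x, v_j⟩) v_j` is a convex combination as soon as all `⟨x, v_j⟩ ≥ -1`.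

If the `v_j` are lattice points, then the vertices of `P^∨ = -P` are lattice points as well.
A lattice point `x` in the interior of `P` has integers `⟨x, v_j⟩ > -1`, hence `⟨x, v_j⟩ ≥ 0`;
as `∑ w_j ⟨x, v_j⟩ = 0`, they all vanish, and `x = 0`.
-/

open Matrix

/-- A point of `ℝ^ι` in the lattice `ℤ^ι`. -/
def IsLatticePoint {ι : Type*} (x : ι → ℝ) : Prop :=
  ∀ i, ∃ m : ℤ, x i = m

lemma isLatticePoint_zero {ι : Type*} : IsLatticePoint (0 : ι → ℝ) :=
  fun _ => ⟨0, by simp⟩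

namespace IsLatticePoint

variable {ι : Type*} {x y : ι → ℝ}

lemma neg (hx : IsLatticePoint x) : IsLatticePoint (-x) := fun i => by
  obtain ⟨m, hm⟩ := hx i
  exact ⟨-m, by simp [hm]⟩

lemma exists_dotProduct_eq_intCast [Fintype ι] (hx : IsLatticePoint x) (hy : IsLatticePoint y) :
    ∃ m : ℤ, x ⬝ᵥ y = m := by
  choose a ha using hx
  choose b hb using hy
  exact ⟨a ⬝ᵥ b, by simp [dotProduct, ha, hb]⟩

end IsLatticePoint

lemma convex_halfSpace_dotProduct_ge {ι 𝕜 : Type*} [Fintype ι] [CommRing 𝕜] [PartialOrder 𝕜]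
    [IsOrderedRing 𝕜] (y : ι → 𝕜) (c : 𝕜) : Convex 𝕜 {x : ι → 𝕜 | c ≤ x ⬝ᵥ y} :=
  convex_halfSpace_ge ⟨fun a b => add_dotProduct a b y, fun a b => smul_dotProduct a b y⟩ c

lemma dotProduct_self_nonneg {ι R : Type*} [Fintype ι] [Ring R] [LinearOrder R]
    [IsOrderedRing R] (x : ι → R) : 0 ≤ x ⬝ᵥ x :=
  sum_nonneg fun i _ => mul_self_nonneg (x i)

lemma mem_dualPoly_convexHull_iff {d : ℕ} {s : Set (Fin d → ℝ)} {y : Fin d → ℝ} :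
    y ∈ dualPoly (convexHull ℝ s) ↔ ∀ x ∈ s, -1 ≤ x ⬝ᵥ -y := by
  have dual_iff : y ∈ dualPoly (convexHull ℝ s) ↔ convexHull ℝ s ⊆ {x | -1 ≤ x ⬝ᵥ -y} := by
    simp only [dotProduct_neg, neg_le_neg_iff]
    rfl
  rw [dual_iff, (convex_halfSpace_dotProduct_ge (-y) (-1)).convexHull_subset_iff]
  rfl

lemma lt_map_of_mem_interior {E : Type*} [AddCommGroup E] [Module ℝ E] [TopologicalSpace E]
    [ContinuousSMul ℝ E] {s : Set E} {f : E →ₗ[ℝ] ℝ} {c : ℝ} (hc : c < 0)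
    (hs : ∀ x ∈ s, c ≤ f x) {x : E} (hx : x ∈ interior s) : c < f x := by
  have dilation_tendsto : Filter.Tendsto (fun t : ℝ => t • x) (nhds 1) (nhds x) :=
    (by fun_prop : Continuous fun t : ℝ => t • x).tendsto' 1 x (one_smul ℝ x)
  obtain ⟨t, ht, htx⟩ :=
    (dilation_tendsto.eventually (mem_interior_iff_mem_nhds.1 hx)).exists_gt
  have hle : c ≤ t * f x := by simpa using hs _ htx
  by_contra! hfx
  nlinarith

/-- The vertices `v_j` of a `d`-dimensional simplex whose polar dual is its antipode: `d + 1` points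
of `𝕜^d` with `⟨v_j, v_k⟩ = -1` for all `j ≠ k`. -/
structure IsAntipolarSimplex {ι κ 𝕜 : Type*} [Fintype ι] [Fintype κ] [CommRing 𝕜]
    (v : κ → ι → 𝕜) : Prop where
  card_eq : Fintype.card κ = Fintype.card ι + 1
  dotProduct_eq_neg_one : Pairwise fun j k => v j ⬝ᵥ v k = -1

lemma IsAntipolarSimplex.neg_one_le_dotProduct {ι κ R : Type*} [Fintype ι] [Fintype κ] [CommRing R]
    [LinearOrder R] [IsOrderedRing R] {v : κ → ι → R} (hv : IsAntipolarSimplex v)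
    (j k : κ) : -1 ≤ v j ⬝ᵥ v k := by
  obtain rfl | hjk := eq_or_ne j k
  · exact (neg_nonpos.2 zero_le_one).trans (dotProduct_self_nonneg (v j))
  · exact (hv.dotProduct_eq_neg_one hjk).ge

/-- The barycentric coordinates of the origin in an antipolar simplex. -/
def originWeight {ι κ 𝕜 : Type*} [Fintype ι] [Field 𝕜] (v : κ → ι → 𝕜) (j : κ) : 𝕜 :=
  (1 + v j ⬝ᵥ v j)⁻¹

/-- The matrix whose rows are the vectors `(1, v_j)`; the column `none` is the leading one. -/
def homogenization {ι κ 𝕜 : Type*} [One 𝕜] (v : κ → ι → 𝕜) : Matrix κ (Option ι) 𝕜 :=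
  Matrix.of fun j i => i.elim 1 (v j)

lemma homogenization_mul_transpose_apply {ι κ 𝕜 : Type*} [Fintype ι] [CommRing 𝕜]
    (v : κ → ι → 𝕜) (j k : κ) :
    (homogenization v * (homogenization v)ᵀ) j k = 1 + v j ⬝ᵥ v k := by
  simp [homogenization, Matrix.mul_apply, Fintype.sum_option, dotProduct]

section OrderedField

variable {ι κ 𝕜 : Type*} [Fintype ι] [Field 𝕜] [LinearOrder 𝕜] [IsStrictOrderedRing 𝕜]
  {v : κ → ι → 𝕜}

lemma originWeight_pos (v : κ → ι → 𝕜) (j : κ) : 0 < originWeight v j :=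
  inv_pos.2 (add_pos_of_pos_of_nonneg one_pos (dotProduct_self_nonneg (v j)))

namespace IsAntipolarSimplex

variable [Fintype κ]

lemma homogenization_mul_transpose_mul_diagonal [DecidableEq κ] (hv : IsAntipolarSimplex v) :
    homogenization v * ((homogenization v)ᵀ * diagonal (originWeight v)) = 1 := by
  ext j k
  rw [← Matrix.mul_assoc, mul_diagonal, homogenization_mul_transpose_apply]
  obtain rfl | hjk := eq_or_ne j k
  · rw [one_apply_eq]
    exact mul_inv_cancel₀ (inv_pos.1 (originWeight_pos v j)).ne'
  · rw [hv.dotProduct_eq_neg_one hjk, one_apply_ne hjk, add_neg_cancel, zero_mul]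

lemma transpose_mul_diagonal_mul_homogenization [DecidableEq ι] [DecidableEq κ]
    (hv : IsAntipolarSimplex v) :
    (homogenization v)ᵀ * diagonal (originWeight v) * homogenization v = 1 :=
  (mul_eq_one_comm_of_card_eq _ _ _ (by simpa using hv.card_eq)).1
    hv.homogenization_mul_transpose_mul_diagonal

lemma sum_originWeight_mul_homogenization_mul [DecidableEq ι] (hv : IsAntipolarSimplex v)
    (a b : Option ι) :
    ∑ j, originWeight v j * homogenization v j a * homogenization v j b =
      if a = b then 1 else 0 := by
  classical
  rw [← one_apply, ← hv.transpose_mul_diagonal_mul_homogenization, Matrix.mul_apply]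
  simp only [mul_diagonal, transpose_apply, mul_comm (originWeight v _)]

lemma sum_originWeight (hv : IsAntipolarSimplex v) : ∑ j, originWeight v j = 1 := by
  classical
  simpa [homogenization] using hv.sum_originWeight_mul_homogenization_mul none none

lemma sum_originWeight_smul (hv : IsAntipolarSimplex v) : ∑ j, originWeight v j • v j = 0 := by
  classical
  ext i
  simpa [homogenization] using hv.sum_originWeight_mul_homogenization_mul none (some i)

lemma sum_originWeight_mul_dotProduct (hv : IsAntipolarSimplex v) (x : ι → 𝕜) :
    ∑ j, originWeight v j * (x ⬝ᵥ v j) = 0 := by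
  simpa [dotProduct_sum] using congrArg (x ⬝ᵥ ·) hv.sum_originWeight_smul

lemma sum_originWeight_mul_dotProduct_smul (hv : IsAntipolarSimplex v) (x : ι → 𝕜) :
    ∑ j, (originWeight v j * (x ⬝ᵥ v j)) • v j = x := by
  classical
  ext b
  have coordinate_identity (a : ι) :
      ∑ j, originWeight v j * v j a * v j b = if a = b then 1 else 0 := by
    simpa [homogenization] using hv.sum_originWeight_mul_homogenization_mul (some a) (some b)
  calc (∑ j, (originWeight v j * (x ⬝ᵥ v j)) • v j) b
      = ∑ j, ∑ a, x a * (originWeight v j * v j a * v j b) := by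
        simp only [Finset.sum_apply, Pi.smul_apply, smul_eq_mul, dotProduct, mul_sum, sum_mul]
        exact sum_congr rfl fun j _ => sum_congr rfl fun a _ => by ring
    _ = ∑ a, x a * ∑ j, originWeight v j * v j a * v j b := by
        rw [sum_comm]
        simp only [mul_sum]
    _ = x b := by simp [coordinate_identity]

lemma mem_convexHull_range_iff (hv : IsAntipolarSimplex v) {x : ι → 𝕜} :
    x ∈ convexHull 𝕜 (Set.range v) ↔ ∀ j, -1 ≤ x ⬝ᵥ v j := by
  constructor
  · intro hx j
    refine convexHull_min ?_ (convex_halfSpace_dotProduct_ge (v j) (-1)) hx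
    rintro _ ⟨k, rfl⟩
    exact hv.neg_one_le_dotProduct k j
  · intro hx
    have combination_eq : ∑ j, (originWeight v j * (1 + x ⬝ᵥ v j)) • v j = x := by
      simp only [mul_add, mul_one, add_smul, sum_add_distrib]
      rw [hv.sum_originWeight_smul, hv.sum_originWeight_mul_dotProduct_smul, zero_add]
    rw [← combination_eq]
    refine (convex_convexHull 𝕜 _).sum_mem (fun j _ => ?_) ?_
      fun j _ => subset_convexHull 𝕜 _ (Set.mem_range_self j)
    · exact mul_nonneg (originWeight_pos v j).le (neg_le_iff_add_nonneg'.1 (hx j))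
    · simp only [mul_add, mul_one, sum_add_distrib]
      rw [hv.sum_originWeight, hv.sum_originWeight_mul_dotProduct, add_zero]

lemma eq_zero_of_dotProduct_nonneg (hv : IsAntipolarSimplex v) {x : ι → 𝕜}
    (hx : ∀ j, 0 ≤ x ⬝ᵥ v j) : x = 0 := by
  have terms_eq_zero := (sum_eq_zero_iff_of_nonneg fun j _ =>
    mul_nonneg (originWeight_pos v j).le (hx j)).1 (hv.sum_originWeight_mul_dotProduct x)
  rw [← hv.sum_originWeight_mul_dotProduct_smul x]
  exact sum_eq_zero fun j hj => by rw [terms_eq_zero j hj, zero_smul]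

end IsAntipolarSimplex

end OrderedField

namespace IsAntipolarSimplex

section Interior

variable {ι κ : Type*} [Fintype ι] [Fintype κ] {v : κ → ι → ℝ}

lemma mem_interior_convexHull_range_iff (hv : IsAntipolarSimplex v) {x : ι → ℝ} :
    x ∈ interior (convexHull ℝ (Set.range v)) ↔ ∀ j, -1 < x ⬝ᵥ v j := by
  constructor
  · intro hx j
    exact lt_map_of_mem_interior (f := (dotProductBilin ℝ ℝ).flip (v j)) neg_one_lt_zero
      (fun y hy => hv.mem_convexHull_range_iff.1 hy j) hx
  · intro hx
    have isOpen_strict : IsOpen {y : ι → ℝ | ∀ j, -1 < y ⬝ᵥ v j} := by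
      simp only [Set.ofPred_forall]
      exact isOpen_iInter_of_finite fun j =>
        isOpen_lt continuous_const (continuous_id.dotProduct continuous_const)
    exact interior_maximal
      (fun y hy => hv.mem_convexHull_range_iff.2 fun j => (hy j).le) isOpen_strict hx

theorem sep_interior_isLatticePoint_eq_singleton (hv : IsAntipolarSimplex v)
    (hlattice : ∀ j, IsLatticePoint (v j)) :
    {x ∈ interior (convexHull ℝ (Set.range v)) | IsLatticePoint x} = {0} := by
  refine Set.eq_singleton_iff_unique_mem.2 ⟨⟨?_, isLatticePoint_zero⟩, ?_⟩
  · exact hv.mem_interior_convexHull_range_iff.2 fun j => by simp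
  · rintro x ⟨hx, hxlattice⟩
    refine hv.eq_zero_of_dotProduct_nonneg fun j => ?_
    obtain ⟨m, hm⟩ := hxlattice.exists_dotProduct_eq_intCast (hlattice j)
    have neg_one_lt : (-1 : ℝ) < m := hm ▸ hv.mem_interior_convexHull_range_iff.1 hx j
    rw [hm]
    exact_mod_cast Int.add_one_le_iff.2 (by exact_mod_cast neg_one_lt : (-1 : ℤ) < m)

end Interior

section Dual

variable {d : ℕ} {κ : Type*} [Fintype κ] {v : κ → Fin d → ℝ}

theorem dualPoly_convexHull_range (hv : IsAntipolarSimplex v) :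
    dualPoly (convexHull ℝ (Set.range v)) = -convexHull ℝ (Set.range v) := by
  ext y
  rw [mem_dualPoly_convexHull_iff, Set.mem_neg, hv.mem_convexHull_range_iff, Set.forall_mem_range]
  simp only [dotProduct_comm]

theorem isLatticePoint_of_mem_extremePoints_dualPoly (hv : IsAntipolarSimplex v)
    (hlattice : ∀ j, IsLatticePoint (v j)) {y : Fin d → ℝ}
    (hy : y ∈ Set.extremePoints ℝ (dualPoly (convexHull ℝ (Set.range v)))) :
    IsLatticePoint y := by
  rw [hv.dualPoly_convexHull_range, ← convexHull_neg] at hy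
  obtain ⟨j, hj⟩ := extremePoints_convexHull_subset hy
  exact neg_eq_iff_eq_neg.1 hj.symm ▸ (hlattice j).neg

end Dual

end IsAntipolarSimplex

lemma isLatticePoint_Cvert (n j : ℕ) : IsLatticePoint (Cvert n j) := by
  intro i
  unfold Cvert
  split_ifs
  · exact ⟨1, by simp⟩
  · exact ⟨-((n : ℤ) - j), by simp⟩
  · exact ⟨0, by simp⟩

lemma Cvert_apply_eq_one {n j : ℕ} {i : Fin (n - 1)} (hi : (i : ℕ) + 1 < n - j) :
    Cvert n j i = 1 :=
  if_pos hi

lemma Cvert_apply_eq_neg {n j : ℕ} {i : Fin (n - 1)} (hi : (i : ℕ) + 1 = n - j) :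
    Cvert n j i = -(i + 1) := by
  rw [Cvert, if_neg hi.not_lt, if_pos hi, ← Nat.cast_sub (by omega), ← hi, Nat.cast_succ]

lemma Cvert_apply_eq_zero {n j : ℕ} {i : Fin (n - 1)} (hi : n - j < (i : ℕ) + 1) :
    Cvert n j i = 0 := by
  rw [Cvert, if_neg hi.not_gt, if_neg hi.ne']

lemma sum_Cvert {n j : ℕ} (hj : 0 < j) (hjn : j < n) : ∑ i, Cvert n j i = -1 := by
  obtain ⟨m, rfl⟩ : ∃ m, n = m + 1 + j := ⟨n - j - 1, by omega⟩
  let pivot : Fin (m + 1 + j - 1) := ⟨m, by omega⟩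
  have Cvert_eq (i : Fin (m + 1 + j - 1)) : Cvert (m + 1 + j) j i =
      (if (i : ℕ) < m then 1 else 0) - if i = pivot then (m + 1 : ℝ) else 0 := by
    obtain hi | hi | hi := lt_trichotomy (i : ℕ) m
    · rw [Cvert_apply_eq_one (by omega), if_pos hi, if_neg (Fin.ne_of_val_ne hi.ne), sub_zero]
    · rw [Cvert_apply_eq_neg (by omega), if_neg hi.not_lt, if_pos (Fin.ext hi), hi, zero_sub]
    · rw [Cvert_apply_eq_zero (by omega), if_neg hi.not_gt, if_neg (Fin.ne_of_val_ne hi.ne'),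
        sub_zero]
  have card_lt : min (m + 1 + j - 1) m = m := by omega
  simp only [Cvert_eq, sum_sub_distrib, sum_boole, Fin.card_filter_val_lt, card_lt, sum_ite_eq',
    mem_univ, if_true]
  ring

lemma Cvert_dotProduct_Cvert_of_lt {n j k : ℕ} (hkj : k < j) (hjn : j < n) :
    Cvert n j ⬝ᵥ Cvert n k = -1 := by
  rw [← sum_Cvert (Nat.zero_lt_of_lt hkj) hjn]
  refine sum_congr rfl fun i _ => ?_
  obtain hi | hi := lt_or_ge (n - j) ((i : ℕ) + 1)
  · rw [Cvert_apply_eq_zero hi, zero_mul]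
  · rw [Cvert_apply_eq_one (j := k) (by omega), mul_one]

lemma isAntipolarSimplex_Cvert (n : ℕ) :
    IsAntipolarSimplex fun j : Fin (n - 1 + 1) => Cvert n j where
  card_eq := by simp only [Fintype.card_fin]
  dotProduct_eq_neg_one j k hjk := by
    obtain h | h := lt_or_gt_of_ne hjk
    · exact dotProduct_comm (Cvert n j) _ ▸ Cvert_dotProduct_Cvert_of_lt h (by omega)
    · exact Cvert_dotProduct_Cvert_of_lt h (by omega)

lemma Qpoly_eq_convexHull_range (n : ℕ) :
    Qpoly n = convexHull ℝ (Set.range fun j : Fin (n - 1 + 1) => Cvert n j) := by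
  unfold Qpoly
  congr 1
  ext x
  simp [Fin.exists_iff, eq_comm]

/-- For every integer `n ≥ 2`, the simplex `Q_n` is reflexive: the
origin is the unique lattice point in the interior of `Q_n`, and every vertex
(extreme point) of the dual polytope `Q_n^∨` has all coordinates in `ℤ`. -/
theorem stmt_4 (n : ℕ) (hn : 2 ≤ n) :
    {x ∈ interior (Qpoly n) | ∀ i, ∃ m : ℤ, x i = (m : ℝ)} = {0} ∧
    ∀ y ∈ Set.extremePoints ℝ (dualPoly (Qpoly n)), ∀ i, ∃ m : ℤ, y i = (m : ℝ) := by
  rw [Qpoly_eq_convexHull_range]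
  have hlattice (j : Fin (n - 1 + 1)) := isLatticePoint_Cvert n j
  exact ⟨(isAntipolarSimplex_Cvert n).sep_interior_isLatticePoint_eq_singleton hlattice,
    fun _ => (isAntipolarSimplex_Cvert n).isLatticePoint_of_mem_extremePoints_dualPoly hlattice⟩
end

section
/- For every integer n ≥ 2, the lattice point enumerator of the pyramid Pyr(Q_n) ⊂ ℝ^n agrees with that of the n-dimensional lecture hall simplex R_n: for every positive integer k, #(k·Pyr(Q_n) ∩ ℤ^n) = #{ λ ∈ ℤ^n : 0 ≤ λ_1/1 ≤ λ_2/2 ≤ ⋯ ≤ λ_n/n ≤ k }. -/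
open Finset Pointwise

/-- The pyramid `Pyr(P) = conv(P × {0}, (0,…,0,1)) ⊂ ℝ^{d+1}` over `P ⊂ ℝ^d`. -/
noncomputable def pyr {d : ℕ} (P : Set (Fin d → ℝ)) : Set (Fin (d + 1) → ℝ) :=
  convexHull ℝ
    ((fun x : Fin d → ℝ => Fin.snoc x 0) '' P ∪ {Fin.snoc (0 : Fin d → ℝ) 1})

/-!
The vertices of `R_n` are `(0, …, 0, m, …, n)` for `1 ≤ m ≤ n + 1`. The affine map
`λ ↦ (1 - (λ₂ - λ₁), …, 1 - (λₙ - λₙ₋₁), λ₁)` sends the one with `m = 1` to the apex of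
`Pyr(Q_n)` and the others to the vertices of the base, so it maps `R_n` onto `Pyr(Q_n)`. Replacing
the constant `1` by `k` gives an affine bijection of `ℤ^n` which maps `k R_n` onto `k Pyr(Q_n)`.
-/

section OrderSimplex

/-- The order polytope of a chain of length `n`, that is `{x | 0 ≤ x₁ ≤ ⋯ ≤ xₙ ≤ 1}`; lecture hall
simplices are its images under coordinatewise rescaling. -/
def orderSimplex (𝕜 : Type*) [Zero 𝕜] [One 𝕜] [Preorder 𝕜] (n : ℕ) : Set (Fin n → 𝕜) :=
  {x | Monotone x} ∩ Set.Icc 0 1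

/-- The vertex of `orderSimplex 𝕜 n` whose first `m` coordinates are `0` and whose other ones
are `1`. -/
def orderVertex (𝕜 : Type*) [Zero 𝕜] [One 𝕜] {n : ℕ} (m : Fin (n + 1)) : Fin n → 𝕜 :=
  fun i => if m ≤ i.castSucc then 1 else 0

theorem monotone_snoc {α : Type*} [Preorder α] {n : ℕ} {f : Fin n → α} {a : α}
    (hf : Monotone f) (ha : ∀ i, f i ≤ a) : Monotone (Fin.snoc f a : Fin (n + 1) → α) := by
  intro i j hij
  induction j using Fin.lastCases with
  | last =>
    induction i using Fin.lastCases with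
    | last => rfl
    | cast i => simpa using ha i
  | cast j =>
    induction i using Fin.lastCases with
    | last => exact absurd hij (Fin.castSucc_lt_last j).not_ge
    | cast i => simpa using hf (Fin.castSucc_le_castSucc_iff.1 hij)

section Vertices

variable {𝕜 : Type*} [Zero 𝕜] [One 𝕜] [Preorder 𝕜] [ZeroLEOneClass 𝕜] {n : ℕ}

theorem orderVertex_mem_orderSimplex (m : Fin (n + 1)) :
    orderVertex 𝕜 m ∈ orderSimplex 𝕜 n := by
  refine ⟨fun i j hij => ?_, fun i => ?_, fun i => ?_⟩
  · have : m ≤ i.castSucc → m ≤ j.castSucc := fun h => h.trans (Fin.castSucc_le_castSucc_iff.2 hij)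
    simp only [orderVertex]
    split_ifs <;> simp_all
  all_goals simp only [orderVertex]; split_ifs <;> simp

theorem exists_monotone_extension {x : Fin n → 𝕜} (hx : x ∈ orderSimplex 𝕜 n) :
    ∃ t : Fin (n + 2) → 𝕜, Monotone t ∧ t 0 = 0 ∧ (∀ i : Fin n, t i.castSucc.succ = x i) ∧
      t (Fin.last (n + 1)) = 1 := by
  obtain ⟨x_mono, x_nonneg, x_le_one⟩ := hx
  have snoc_nonneg : 0 ≤ (Fin.snoc x 1 : Fin (n + 1) → 𝕜) 0 := by
    cases n with
    | zero => exact zero_le_one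
    | succ n => exact x_nonneg 0
  refine ⟨Matrix.vecCons 0 (Fin.snoc x 1 : Fin (n + 1) → 𝕜),
    (monotone_snoc x_mono x_le_one).vecCons snoc_nonneg, rfl, fun i => ?_, ?_⟩
  · rw [Matrix.cons_val_succ, Fin.snoc_castSucc]
  · rw [← Fin.succ_last, Matrix.cons_val_succ, Fin.snoc_last]

end Vertices

theorem convex_orderSimplex {𝕜 : Type*} [Ring 𝕜] [PartialOrder 𝕜] [IsOrderedRing 𝕜] {n : ℕ} :
    Convex 𝕜 (orderSimplex 𝕜 n) := by
  refine Convex.inter ?_ (convex_Icc 0 1)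
  intro x hx y hy a b ha hb _ i j hij
  exact add_le_add (mul_le_mul_of_nonneg_left (hx hij) ha) (mul_le_mul_of_nonneg_left (hy hij) hb)

theorem sum_sub_smul_orderVertex {𝕜 : Type*} [Ring 𝕜] {n : ℕ} (t : Fin (n + 2) → 𝕜)
    (i : Fin n) :
    (∑ m, (t m.succ - t m.castSucc) • orderVertex 𝕜 m) i = t i.castSucc.succ - t 0 := by
  simp only [Finset.sum_apply, Pi.smul_apply, orderVertex, smul_eq_mul, mul_ite, mul_one, mul_zero,
    ← Finset.sum_filter, Finset.filter_ge_eq_Iic]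
  exact Fin.sum_Iic_sub i.castSucc t

variable {𝕜 : Type*} [Field 𝕜] [LinearOrder 𝕜] [IsStrictOrderedRing 𝕜] {n : ℕ}

-- The barycentric coordinates of `x` are the jumps of the sequence `0, x₁, …, xₙ, 1`.
theorem mem_convexHull_orderVertex {x : Fin n → 𝕜} (hx : x ∈ orderSimplex 𝕜 n) :
    x ∈ convexHull 𝕜 (Set.range (orderVertex 𝕜 : Fin (n + 1) → Fin n → 𝕜)) := by
  obtain ⟨t, t_mono, t_zero, t_succ, t_last⟩ := exists_monotone_extension hx
  have jumps_sum : ∑ m : Fin (n + 1), (t m.succ - t m.castSucc) = 1 := by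
    rw [← Finset.Iic_top, Fin.sum_Iic_sub, Fin.top_eq_last, Fin.succ_last, t_last, t_zero, sub_zero]
  have jumps_smul : ∑ m, (t m.succ - t m.castSucc) • orderVertex 𝕜 m = x := by
    funext i
    rw [sum_sub_smul_orderVertex, t_succ, t_zero, sub_zero]
  exact mem_convexHull_of_exists_fintype _ (orderVertex 𝕜)
    (fun m => sub_nonneg.2 (t_mono m.castSucc_le_succ)) jumps_sum Set.mem_range_self jumps_smul

theorem orderSimplex_eq_convexHull :
    orderSimplex 𝕜 n = convexHull 𝕜 (Set.range (orderVertex 𝕜)) :=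
  Set.Subset.antisymm (fun _ => mem_convexHull_orderVertex) <|
    convexHull_min (Set.range_subset_iff.2 orderVertex_mem_orderSimplex) convex_orderSimplex

end OrderSimplex

section LectureHall

variable {𝕜 : Type*} [Field 𝕜] [LinearOrder 𝕜] [IsStrictOrderedRing 𝕜] {n : ℕ}

/-- The `s`-lecture hall simplex `{l | 0 ≤ l₁ / s₁ ≤ ⋯ ≤ lₙ / sₙ ≤ 1}`; the simplex `R_n` is the
case `s = (1, …, n)`. -/
def lectureHallSimplex (s : Fin n → 𝕜) : Set (Fin n → 𝕜) :=
  {l | l / s ∈ orderSimplex 𝕜 n}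

theorem lectureHallSimplex_eq_convexHull {s : Fin n → 𝕜} (hs : ∀ i, s i ≠ 0) :
    lectureHallSimplex s = convexHull 𝕜 (Set.range fun m => s * orderVertex 𝕜 m) := by
  have image_mul : (LinearMap.mulLeft 𝕜 s) '' orderSimplex 𝕜 n = lectureHallSimplex s := by
    ext l
    constructor
    · rintro ⟨x, hx, rfl⟩
      have : s * x / s = x := funext fun i => mul_div_cancel_left₀ (x i) (hs i)
      simpa [lectureHallSimplex, this] using hx
    · exact fun hl => ⟨l / s, hl, funext fun i => mul_div_cancel₀ (l i) (hs i)⟩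
  rw [← image_mul, orderSimplex_eq_convexHull, LinearMap.image_convexHull, ← Set.range_comp]
  rfl

theorem mem_smul_lectureHallSimplex_iff {k : 𝕜} (hk : 0 < k) {s l : Fin n → 𝕜} :
    l ∈ k • lectureHallSimplex s ↔ Monotone (l / s) ∧ ∀ i, 0 ≤ l i / s i ∧ l i / s i ≤ k := by
  have smul_div : k⁻¹ • l / s = k⁻¹ • (l / s) := smul_div_assoc ..
  have monotone_smul : Monotone (k⁻¹ • (l / s)) ↔ Monotone (l / s) :=
    forall₃_congr fun _ _ _ => mul_le_mul_iff_right₀ (inv_pos.2 hk)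
  have smul_le_one : k⁻¹ • (l / s) ≤ 1 ↔ ∀ i, l i / s i ≤ k :=
    forall_congr' fun _ => inv_mul_le_one₀ hk
  have zero_le_smul : 0 ≤ k⁻¹ • (l / s) ↔ ∀ i, 0 ≤ l i / s i :=
    forall_congr' fun _ => mul_nonneg_iff_of_pos_left (inv_pos.2 hk)
  rw [Set.mem_smul_set_iff_inv_smul_mem₀ hk.ne', lectureHallSimplex, Set.mem_ofPred_eq, smul_div,
    orderSimplex, Set.mem_inter_iff, Set.mem_ofPred_eq, Set.mem_Icc, monotone_smul, zero_le_smul,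
    smul_le_one, forall_and]

theorem forall_val_eq_succ_iff {d : ℕ} {p : Fin (d + 1) → Fin (d + 1) → Prop} :
    (∀ i j : Fin (d + 1), (j : ℕ) = i + 1 → p i j) ↔ ∀ i : Fin d, p i.castSucc i.succ := by
  refine ⟨fun h i => h _ _ (by simp), fun h i j hij => ?_⟩
  have hi : (i : ℕ) < d := by omega
  obtain rfl : j = (⟨i, hi⟩ : Fin d).succ := Fin.ext hij
  exact h ⟨i, hi⟩

theorem mem_smul_lectureHallSimplex_iff_forall_val_eq_succ {d : ℕ} {k : 𝕜} (hk : 0 < k)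
    {s l : Fin (d + 1) → 𝕜} :
    l ∈ k • lectureHallSimplex s ↔ 0 ≤ l 0 / s 0 ∧
      (∀ i j : Fin (d + 1), (j : ℕ) = i + 1 → l i / s i ≤ l j / s j) ∧
        l (Fin.last d) / s (Fin.last d) ≤ k := by
  rw [mem_smul_lectureHallSimplex_iff hk, forall_val_eq_succ_iff]
  constructor
  · rintro ⟨mono, bounds⟩
    exact ⟨(bounds 0).1, fun i => mono i.castSucc_le_succ, (bounds (Fin.last d)).2⟩
  · rintro ⟨first_nonneg, step, last_le⟩
    have mono : Monotone (l / s) := Fin.monotone_iff_le_succ.2 step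
    exact ⟨mono, fun i => ⟨first_nonneg.trans (mono i.zero_le), (mono i.le_last).trans last_le⟩⟩

end LectureHall

section GapMap

variable {R : Type*} [Ring R] {d : ℕ}

/-- The affine map `l ↦ (c - (l₂ - l₁), …, c - (l_{d+1} - l_d), l₁)`; for `c = 1` it carries the
lecture hall simplex to the pyramid, and for `c = k` the `k`-th dilate to the `k`-th dilate. -/
def gapMap (c : R) : (Fin (d + 1) → R) →ᵃ[R] (Fin (d + 1) → R) where
  toFun l := Fin.snoc (fun i : Fin d => c - (l i.succ - l i.castSucc)) (l 0)
  linear :=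
    { toFun := fun v => Fin.snoc (fun i : Fin d => v i.castSucc - v i.succ) (v 0)
      map_add' := fun v w => by
        funext i
        induction i using Fin.lastCases <;> simp [add_sub_add_comm]
      map_smul' := fun a v => by
        funext i
        induction i using Fin.lastCases <;> simp [mul_sub] }
  map_vadd' l v := by
    funext i
    induction i using Fin.lastCases
    · simp
    · simp only [Fin.snoc_castSucc, vadd_eq_add, Pi.add_apply, LinearMap.coe_mk, AddHom.coe_mk]
      abel

@[simp]
theorem gapMap_castSucc (c : R) (l : Fin (d + 1) → R) (i : Fin d) :
    gapMap c l i.castSucc = c - (l i.succ - l i.castSucc) := by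
  simp [gapMap]

@[simp]
theorem gapMap_last (c : R) (l : Fin (d + 1) → R) : gapMap c l (Fin.last d) = l 0 := by
  simp [gapMap]

theorem gapMap_injective (c : R) : Function.Injective (gapMap c : (Fin (d + 1) → R) → _) := by
  intro l l' h
  funext i
  induction i using Fin.induction with
  | zero => simpa using congrFun h (Fin.last d)
  | succ i ih => simpa [ih] using congrFun h i.castSucc

theorem gapMap_surjective (c : R) : Function.Surjective (gapMap c : (Fin (d + 1) → R) → _) := by
  intro y
  refine ⟨fun i => y (Fin.last d) + Fin.partialSum (fun j : Fin d => c - y j.castSucc) i, ?_⟩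
  funext i
  induction i using Fin.lastCases <;> simp [Fin.partialSum_succ]

theorem smul_gapMap (a c : R) (l : Fin (d + 1) → R) :
    a • gapMap c l = gapMap (a * c) (a • l) := by
  funext i
  induction i using Fin.lastCases <;> simp [mul_sub]

theorem smul_image_gapMap (a c : R) (S : Set (Fin (d + 1) → R)) :
    a • (gapMap c '' S) = gapMap (a * c) '' (a • S) := by
  simp only [← Set.image_smul, Set.image_image, smul_gapMap]

theorem intCast_gapMap (c : ℤ) (l : Fin (d + 1) → ℤ) :
    (fun i => (gapMap c l i : R)) = gapMap (c : R) (fun i => (l i : R)) := by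
  funext i
  induction i using Fin.lastCases <;> simp

theorem ncard_intCast_mem_image_gapMap (c : ℤ) (S : Set (Fin (d + 1) → R)) :
    {y : Fin (d + 1) → ℤ | (fun i => (y i : R)) ∈ gapMap (c : R) '' S}.ncard =
      {l : Fin (d + 1) → ℤ | (fun i => (l i : R)) ∈ S}.ncard := by
  rw [← Set.ncard_preimage_of_injective_subset_range (gapMap_injective c)
    (by simp [(gapMap_surjective c).range_eq])]
  simp only [Set.preimage_ofPred_eq, intCast_gapMap, (gapMap_injective (c : R)).mem_set_image]

end GapMap

section Pyramid

variable {d : ℕ}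

theorem pyr_convexHull (S : Set (Fin d → ℝ)) :
    pyr (convexHull ℝ S) =
      convexHull ℝ (insert (Fin.snoc 0 1) ((fun x : Fin d → ℝ => Fin.snoc x 0) '' S)) := by
  have snoc_linear : IsLinearMap ℝ fun x : Fin d → ℝ => (Fin.snoc x 0 : Fin (d + 1) → ℝ) := by
    constructor <;> intros <;> funext i <;> induction i using Fin.lastCases <;> simp
  rw [pyr, snoc_linear.image_convexHull, convexHull_convexHull_union_left, Set.union_singleton]

theorem gapMap_mul_orderVertex_zero :
    gapMap (1 : ℝ) ((fun i : Fin (d + 1) => (i : ℝ) + 1) * orderVertex ℝ 0) = Fin.snoc 0 1 := by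
  funext i
  induction i using Fin.lastCases <;> simp [orderVertex]

theorem gapMap_mul_orderVertex_succ_rev (j : Fin (d + 1)) :
    gapMap (1 : ℝ) ((fun i : Fin (d + 1) => (i : ℝ) + 1) * orderVertex ℝ j.rev.succ) =
      Fin.snoc (α := fun _ => ℝ) (Cvert (d + 1) j : Fin d → ℝ) 0 := by
  funext i
  induction i using Fin.lastCases with
  | last => simp [orderVertex]
  | cast i =>
    simp only [gapMap_castSucc, Fin.snoc_castSucc, Pi.mul_apply, orderVertex, Cvert, Fin.le_def,
      Fin.val_succ, Fin.val_castSucc, Fin.val_rev]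
    rcases lt_trichotomy ((i : ℕ) + 1) (d + 1 - j) with below | diagonal | above
    · rw [if_neg (by omega), if_neg (by omega), if_pos below]
      ring
    · have cast_diagonal : (i : ℝ) + 1 + j = d + 1 := by
        exact_mod_cast (by omega : (i : ℕ) + 1 + j = d + 1)
      rw [if_pos (by omega), if_neg (by omega), if_neg diagonal.not_lt, if_pos diagonal]
      push_cast
      linear_combination -cast_diagonal
    · rw [if_pos (by omega), if_pos (by omega), if_neg above.not_gt, if_neg above.ne']
      push_cast
      ring

theorem Qpoly_succ :
    (Qpoly (d + 1) : Set (Fin d → ℝ)) =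
      convexHull ℝ (Set.range fun j : Fin (d + 1) => Cvert (d + 1) j) := by
  refine congrArg (convexHull ℝ) (Set.ext fun x => ?_)
  simp [Fin.exists_iff, eq_comm]

theorem pyr_Qpoly_eq_image_gapMap :
    pyr (d := d) (Qpoly (d + 1)) =
      gapMap (1 : ℝ) '' lectureHallSimplex fun i : Fin (d + 1) => (i : ℝ) + 1 := by
  let s : Fin (d + 1) → ℝ := fun i => (i : ℝ) + 1
  have base_vertices :
      (Set.range fun m : Fin (d + 1) => gapMap (1 : ℝ) (s * orderVertex ℝ m.succ)) =
        Set.range fun j : Fin (d + 1) => Fin.snoc (α := fun _ => ℝ) (Cvert (d + 1) j) 0 := by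
    rw [← Fin.rev_surjective.range_comp]
    exact congrArg Set.range (funext gapMap_mul_orderVertex_succ_rev)
  calc pyr (d := d) (Qpoly (d + 1))
    _ = convexHull ℝ (insert (Fin.snoc 0 1)
          (Set.range fun j : Fin (d + 1) => Fin.snoc (Cvert (d + 1) j) 0)) := by
      rw [Qpoly_succ, pyr_convexHull, ← Set.range_comp]
      rfl
    _ = convexHull ℝ (Set.range fun m => gapMap (1 : ℝ) (s * orderVertex ℝ m)) := by
      rw [← base_vertices, ← gapMap_mul_orderVertex_zero]
      exact congrArg (convexHull ℝ)
        (Fin.range_fin_succ fun m => gapMap (1 : ℝ) (s * orderVertex ℝ m)).symm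
    _ = gapMap (1 : ℝ) '' lectureHallSimplex s := by
      rw [lectureHallSimplex_eq_convexHull fun i => by positivity, AffineMap.image_convexHull,
        ← Set.range_comp]
      rfl

theorem smul_pyr_Qpoly_eq_image_gapMap (k : ℝ) :
    k • pyr (d := d) (Qpoly (d + 1)) =
      gapMap k '' (k • lectureHallSimplex fun i : Fin (d + 1) => (i : ℝ) + 1) := by
  rw [pyr_Qpoly_eq_image_gapMap, smul_image_gapMap, mul_one]

end Pyramid

/-- For every integer `n ≥ 2` and every positive integer `k`, the
number of lattice points of the `k`-th dilate of the pyramid `Pyr(Q_n) ⊂ ℝ^n` equals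
the number of lattice points of the `k`-th dilate of the `n`-dimensional lecture hall
simplex: `#(k·Pyr(Q_n) ∩ ℤ^n) = #{λ ∈ ℤ^n : 0 ≤ λ_1/1 ≤ λ_2/2 ≤ ⋯ ≤ λ_n/n ≤ k}`
(here `n = (n-1)+1` since `n ≥ 2`, and `λ_i` is the coordinate indexed 1-based by `i`). -/
theorem stmt_10 (n : ℕ) (hn : 2 ≤ n) (k : ℕ) (hk : 1 ≤ k) :
    Set.ncard {y : Fin (n - 1 + 1) → ℤ |
        (fun i => (y i : ℝ)) ∈ (k : ℝ) • pyr (Qpoly n)} =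
    Set.ncard {lam : Fin (n - 1 + 1) → ℤ |
        0 ≤ (lam 0 : ℝ) / 1 ∧
        (∀ i j : Fin (n - 1 + 1), (j : ℕ) = (i : ℕ) + 1 →
          (lam i : ℝ) / ((i : ℕ) + 1) ≤ (lam j : ℝ) / ((j : ℕ) + 1)) ∧
        (lam (Fin.last (n - 1)) : ℝ) / ((n - 1 : ℕ) + 1) ≤ (k : ℝ)} := by
  obtain ⟨d, rfl⟩ : ∃ d, n = d + 1 := ⟨n - 1, by omega⟩
  have k_pos : (0 : ℝ) < k := by exact_mod_cast hk
  let s : Fin (d + 1) → ℝ := fun i => (i : ℝ) + 1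
  calc {y : Fin (d + 1) → ℤ |
        (fun i => (y i : ℝ)) ∈ (k : ℝ) • pyr (d := d) (Qpoly (d + 1))}.ncard
    _ = {l : Fin (d + 1) → ℤ | (fun i => (l i : ℝ)) ∈ (k : ℝ) • lectureHallSimplex s}.ncard := by
      rw [smul_pyr_Qpoly_eq_image_gapMap, ← Int.cast_natCast k, ncard_intCast_mem_image_gapMap]
    _ = _ := by
      simp only [mem_smul_lectureHallSimplex_iff_forall_val_eq_succ k_pos]
      simp [s]
end
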